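/- Let d = (d_1, …, d_n) be a graphical degree sequence with d_min ≥ 1 and 3 ≤ d_max ≤ (1/3)·√M, and let Z ∈ Ω(d). Then for every (p,q) ∈ {(2,1), (2,0), (1,2), (1,1), (1,0)}, one has |C(p,q)| ≤ 2·d_max^2·|C(p−1, q)|, where C(p,q) is the set of good encodings consistent with Z having exactly p 2-defect edges and exactly q (−1)-defect edges. -/

import Mathlib

/-! The bound is a double count of switchings. Given `L ∈ C(p, q)` with a `2`-edge `ab`, take an
ordered pair `(u, v)` with `L u v = 1` such that `u` is neither equal nor adjacent to `a` and `v`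
is neither equal nor adjacent to `b`. Removing one unit from `ab` and `uv` and adding one unit to
`au` and `bv` preserves row sums, turns `ab` into a `1`-edge and creates no defect edge. The
conditions for being valid, good and consistent with `Z` are inherited, so the result lies
in `C(p - 1, q)` (`switch_mem`).

Write `D` for the maximum degree. For a fixed ordered `2`-pair `(a, b)` there are at least
`T = M - 4p - 2D² - 2qD - 2q` choices of `(u, v)` (`card_avail`), hence at least `2pT` switchings
from each `L`. In reverse, an element of `C(p - 1, q)` has `M + 2q - 4(p - 1)` ordered `1`-pairs
`(a, b)`, each with at most `(D + 1)²` choices of `(u, v)` (`card_back_le`). The label change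
depends on `a, b, u, v` only, so a switching is determined by its result and these vertices, which
gives `count_le`. Since `M ≥ 9D²` and `D ≥ 3`, the quotient of the two counts is at most `2D²`. -/

open scoped Classical

noncomputable section

namespace SwitchChain

variable {n : ℕ}

/-- `Omega d` is the set of simple graphs on `[n] = Fin n` with degree sequence `d`. -/
def Omega (d : Fin n → ℕ) : Set (SimpleGraph (Fin n)) :=
  {G | ∀ v, {w | G.Adj v w}.ncard = d v}

/-- `M d` is the sum of the degrees. -/
def M (d : Fin n → ℕ) : ℕ := ∑ j, d j

/-- The maximum degree. -/
def dmax (d : Fin n → ℕ) : ℕ := Finset.univ.sup d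

/-- An encoding for the degree sequence `d`: a symmetric integer matrix with zero
diagonal, entries in `{-1, 0, 1, 2}`, and row sums `d`. -/
def IsEncoding (d : Fin n → ℕ) (L : Matrix (Fin n) (Fin n) ℤ) : Prop :=
  (∀ i j, L i j = L j i) ∧ (∀ i, L i i = 0) ∧
  (∀ i j, L i j = -1 ∨ L i j = 0 ∨ L i j = 1 ∨ L i j = 2) ∧
  (∀ i, ∑ j, L i j = (d i : ℤ))

/-- The set of (unordered) edges of `L` carrying the label `c`. -/
def labelEdges (L : Matrix (Fin n) (Fin n) ℤ) (c : ℤ) : Set (Sym2 (Fin n)) :=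
  {e | ∃ x y : Fin n, e = s(x, y) ∧ x ≠ y ∧ L x y = c}

/-- Every defect edge of `L` occurs, with its label, in the labelled edge set `D`. -/
def DefectsWithin (L : Matrix (Fin n) (Fin n) ℤ) (D : Set (Sym2 (Fin n) × ℤ)) : Prop :=
  ∀ x y : Fin n, x ≠ y → (L x y = 2 ∨ L x y = -1) → (s(x, y), L x y) ∈ D

/-- A valid encoding: at most four defect edges, forming a labelled subgraph of one
of the five possible configurations. -/
def ValidEncoding (d : Fin n → ℕ) (L : Matrix (Fin n) (Fin n) ℤ) : Prop :=
  IsEncoding d L ∧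
  (labelEdges L 2).ncard + (labelEdges L (-1)).ncard ≤ 4 ∧
  ∃ (a b c u e f : Fin n) (ℓ : ℤ), (ℓ = -1 ∨ ℓ = 2) ∧
    (([a, b, c, u].Pairwise (· ≠ ·) ∧ e ≠ f ∧
        e ∉ ({a, b, c, u} : Set (Fin n)) ∧ f ∉ ({a, b, c, u} : Set (Fin n)) ∧
        DefectsWithin L {(s(a, b), 2), (s(b, c), -1), (s(b, u), -1), (s(e, f), ℓ)}) ∨
     ([a, b, c, u, e].Pairwise (· ≠ ·) ∧
        DefectsWithin L {(s(a, b), 2), (s(b, c), -1), (s(b, u), -1), (s(u, e), ℓ)}) ∨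
     ([a, b, c, u, e].Pairwise (· ≠ ·) ∧
        DefectsWithin L {(s(a, b), -1), (s(b, c), -1), (s(b, u), 2), (s(u, e), ℓ)}) ∨
     ([a, b, c, u].Pairwise (· ≠ ·) ∧
        DefectsWithin L {(s(a, b), -1), (s(b, c), -1), (s(b, u), 2), (s(u, c), ℓ)}) ∨
     ([a, b, c, u].Pairwise (· ≠ ·) ∧
        DefectsWithin L {(s(a, b), 2), (s(b, c), -1), (s(b, u), -1), (s(u, c), ℓ)}))

/-- A good encoding: a valid encoding satisfying the degree conditions of
Lemma 2.3. -/
def GoodEncoding (d : Fin n → ℕ) (L : Matrix (Fin n) (Fin n) ℤ) : Prop :=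
  ValidEncoding d L ∧
  (∀ x y : Fin n, x ≠ y → L x y = 2 → 2 ≤ d x ∧ 2 ≤ d y) ∧
  (∀ x y z : Fin n, x ≠ y → y ≠ z → x ≠ z → L x y = 2 → L y z = 2 → 4 ≤ d y) ∧
  (∀ x y z : Fin n, x ≠ y → y ≠ z → x ≠ z → L x y = 2 → L y z = -1 → 3 ≤ d y)

/-- The 0-1 adjacency matrix of a simple graph, over `ℤ`. -/
def adjMat (Z : SimpleGraph (Fin n)) : Matrix (Fin n) (Fin n) ℤ :=
  fun i j => if Z.Adj i j then 1 else 0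

/-- `L` is consistent with `Z` if every entry of `L + Z` lies in `{0, 1, 2}`. -/
def ConsistentWith (L : Matrix (Fin n) (Fin n) ℤ) (Z : SimpleGraph (Fin n)) : Prop :=
  ∀ i j, L i j + adjMat Z i j = 0 ∨ L i j + adjMat Z i j = 1 ∨ L i j + adjMat Z i j = 2


/-- `C(p,q)`: the set of good encodings consistent with `Z` having exactly `p`
2-defect edges and exactly `q` (−1)-defect edges. -/
def Cset (d : Fin n → ℕ) (Z : SimpleGraph (Fin n)) (p q : ℕ) :
    Set (Matrix (Fin n) (Fin n) ℤ) :=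
  {L | GoodEncoding d L ∧ ConsistentWith L Z ∧
    (labelEdges L 2).ncard = p ∧ (labelEdges L (-1)).ncard = q}

/-! ### Label counts -/

/-- The number of entries equal to `c` in row `x` of `L`. -/
def cnt (L : Matrix (Fin n) (Fin n) ℤ) (c : ℤ) (x : Fin n) : ℕ :=
  (Finset.univ.filter (fun y => L x y = c)).card

/-- The simple graph formed by the edges of `L` with label `c`. -/
def labelGraph (L : Matrix (Fin n) (Fin n) ℤ) (hs : ∀ i j, L i j = L j i) (c : ℤ) :
    SimpleGraph (Fin n) where
  Adj x y := x ≠ y ∧ L x y = c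
  symm := ⟨fun x y h => ⟨h.1.symm, by rw [hs]; exact h.2⟩⟩
  loopless := ⟨fun _ h => h.1 rfl⟩

lemma labelGraph_edgeSet (L : Matrix (Fin n) (Fin n) ℤ) (hs : ∀ i j, L i j = L j i) (c : ℤ) :
    (labelGraph L hs c).edgeSet = labelEdges L c := by
  ext e
  induction e using Sym2.ind with
  | _ x y =>
    constructor
    · intro h
      exact ⟨x, y, rfl, h.1, h.2⟩
    · rintro ⟨x', y', h, hne, hl⟩
      have : s(x', y') ∈ (labelGraph L hs c).edgeSet := ⟨hne, hl⟩
      rwa [h]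

lemma labelGraph_card (L : Matrix (Fin n) (Fin n) ℤ) (hs : ∀ i j, L i j = L j i) (c : ℤ) :
    (labelGraph L hs c).edgeFinset.card = (labelEdges L c).ncard := by
  rw [← labelGraph_edgeSet L hs c, ← SimpleGraph.coe_edgeFinset, Set.ncard_coe_finset]

lemma labelGraph_degree (L : Matrix (Fin n) (Fin n) ℤ) (hs : ∀ i j, L i j = L j i)
    (hd : ∀ i, L i i = 0) {c : ℤ} (hc : c ≠ 0) (x : Fin n) :
    (labelGraph L hs c).degree x = cnt L c x := by
  rw [← SimpleGraph.card_neighborFinset_eq_degree, cnt]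
  congr 1
  ext y
  simp only [SimpleGraph.mem_neighborFinset, Finset.mem_filter, Finset.mem_univ, true_and]
  constructor
  · exact fun h => h.2
  · intro h
    refine ⟨?_, h⟩
    rintro rfl
    exact hc (h ▸ hd x)

lemma sum_cnt (L : Matrix (Fin n) (Fin n) ℤ) (hs : ∀ i j, L i j = L j i)
    (hd : ∀ i, L i i = 0) {c : ℤ} (hc : c ≠ 0) :
    ∑ x, cnt L c x = 2 * (labelEdges L c).ncard := by
  rw [← labelGraph_card L hs c, ← SimpleGraph.sum_degrees_eq_twice_card_edges]
  exact Finset.sum_congr rfl fun x _ => (labelGraph_degree L hs hd hc x).symm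

lemma cnt_le (L : Matrix (Fin n) (Fin n) ℤ) (hs : ∀ i j, L i j = L j i)
    (hd : ∀ i, L i i = 0) {c : ℤ} (hc : c ≠ 0) (x : Fin n) :
    cnt L c x ≤ (labelEdges L c).ncard := by
  rw [← labelGraph_card L hs c, ← labelGraph_degree L hs hd hc x,
    ← SimpleGraph.card_incidenceFinset_eq_degree]
  exact Finset.card_le_card (SimpleGraph.incidenceFinset_subset _ _)

/-- Two vertices that are not joined by a `c`-edge have disjoint sets of incident `c`-edges. -/
lemma cnt_add_cnt_le (L : Matrix (Fin n) (Fin n) ℤ) (hs : ∀ i j, L i j = L j i)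
    (hd : ∀ i, L i i = 0) {c : ℤ} (hc : c ≠ 0) {x y : Fin n} (hxy : x ≠ y) (h : L x y ≠ c) :
    cnt L c x + cnt L c y ≤ (labelEdges L c).ncard := by
  rw [← labelGraph_card L hs c, ← labelGraph_degree L hs hd hc x,
    ← labelGraph_degree L hs hd hc y,
    ← SimpleGraph.card_incidenceFinset_eq_degree, ← SimpleGraph.card_incidenceFinset_eq_degree,
    ← Finset.card_union_of_disjoint]
  · exact Finset.card_le_card (Finset.union_subset (SimpleGraph.incidenceFinset_subset _ _)
      (SimpleGraph.incidenceFinset_subset _ _))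
  · rw [Finset.disjoint_left]
    intro e he he'
    rw [SimpleGraph.mem_incidenceFinset] at he he'
    have he2 : e = s(x, y) := (Sym2.mem_and_mem_iff hxy).1 ⟨he.2, he'.2⟩
    subst he2
    exact h he.1.2

lemma row_eq {d : Fin n → ℕ} {L : Matrix (Fin n) (Fin n) ℤ} (hL : IsEncoding d L) (x : Fin n) :
    cnt L 1 x + 2 * cnt L 2 x = d x + cnt L (-1) x := by
  have key : ∀ y, L x y = (if L x y = 1 then 1 else 0) + 2 * (if L x y = 2 then 1 else 0)
      - (if L x y = -1 then 1 else 0) := by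
    intro y
    rcases hL.2.2.1 x y with h | h | h | h <;> simp [h]
  have h := hL.2.2.2 x
  rw [Finset.sum_congr rfl fun y _ => key y, Finset.sum_sub_distrib, Finset.sum_add_distrib,
    ← Finset.mul_sum] at h
  simp only [Finset.sum_boole] at h
  unfold cnt
  omega

/-- The vertices `u` that are equal or adjacent to `x` in the labelled graph of `L`. -/
def closedNbr (L : Matrix (Fin n) (Fin n) ℤ) (x : Fin n) : Finset (Fin n) :=
  Finset.univ.filter (fun u => u = x ∨ L x u ≠ 0)

lemma card_closedNbr_le {d : Fin n → ℕ} {L : Matrix (Fin n) (Fin n) ℤ} (hL : IsEncoding d L)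
    (x : Fin n) : (closedNbr L x).card ≤ 1 + cnt L 1 x + cnt L 2 x + cnt L (-1) x := by
  have hsub : closedNbr L x ⊆ (({x} ∪ Finset.univ.filter (fun y => L x y = 1)) ∪
      Finset.univ.filter (fun y => L x y = 2)) ∪ Finset.univ.filter (fun y => L x y = -1) := by
    intro u hu
    simp only [closedNbr, Finset.mem_filter, Finset.mem_univ, true_and] at hu
    simp only [Finset.mem_union, Finset.mem_singleton, Finset.mem_filter, Finset.mem_univ,
      true_and]
    rcases hL.2.2.1 x u with h | h | h | h <;> simp_all
  refine (Finset.card_le_card hsub).trans ((Finset.card_union_le _ _).trans ?_)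
  refine Nat.add_le_add_right ((Finset.card_union_le _ _).trans ?_) _
  refine Nat.add_le_add_right ((Finset.card_union_le _ _).trans ?_) _
  simp [cnt]

/-- The ordered pairs carrying the label `c`. -/
def pairs (L : Matrix (Fin n) (Fin n) ℤ) (c : ℤ) : Finset (Fin n × Fin n) :=
  Finset.univ.filter (fun w => L w.1 w.2 = c)

lemma card_pairs_filter (L : Matrix (Fin n) (Fin n) ℤ) (c : ℤ) (s : Finset (Fin n)) :
    ((pairs L c).filter (fun w => w.1 ∈ s)).card = ∑ x ∈ s, cnt L c x := by
  unfold cnt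
  rw [← Finset.card_sigma]
  refine Finset.card_bij' (fun w _ => ⟨w.1, w.2⟩) (fun w _ => (w.1, w.2)) ?_ ?_ ?_ ?_ <;>
    simp +contextual [pairs]

lemma card_pairs (L : Matrix (Fin n) (Fin n) ℤ) (c : ℤ) :
    (pairs L c).card = ∑ x, cnt L c x := by
  rw [← card_pairs_filter]
  simp

/-- Total degree: the label sum `M` counts each `1`-pair once, each `2`-pair twice and each
`(-1)`-pair negatively. -/
lemma card_pairs_one {d : Fin n → ℕ} {L : Matrix (Fin n) (Fin n) ℤ} (hL : IsEncoding d L) :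
    (pairs L 1).card + 4 * (labelEdges L 2).ncard = M d + 2 * (labelEdges L (-1)).ncard := by
  rw [card_pairs]
  have h2 := sum_cnt L hL.1 hL.2.1 (c := 2) (by norm_num)
  have h3 := sum_cnt L hL.1 hL.2.1 (c := -1) (by norm_num)
  have h := Finset.sum_congr (rfl : (Finset.univ : Finset (Fin n)) = Finset.univ)
    fun x _ => row_eq hL x
  rw [Finset.sum_add_distrib, Finset.sum_add_distrib, ← Finset.mul_sum] at h
  unfold M
  omega

lemma le_dmax (d : Fin n → ℕ) (x : Fin n) : d x ≤ dmax d :=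
  Finset.le_sup (f := d) (Finset.mem_univ x)

lemma pairs_swap_filter (L : Matrix (Fin n) (Fin n) ℤ) (hs : ∀ i j, L i j = L j i)
    (c : ℤ) (s : Finset (Fin n)) :
    ((pairs L c).filter (fun w => w.2 ∈ s)).card =
      ((pairs L c).filter (fun w => w.1 ∈ s)).card := by
  refine Finset.card_bij' (fun w _ => w.swap) (fun w _ => w.swap) ?_ ?_ ?_ ?_ <;>
    simp +contextual [pairs, hs]

/-- If `a` lies on a `2`-edge, then at most `D² + 2 m D + 2 q` of the `1`-pairs start in the closed
neighbourhood of `a`, where `D` is the maximum degree and `m` is the number of `(-1)`-edges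
at `a`. The `2`-edge compensates for counting `a` itself, so the neighbourhood has at most
`D + 2 m` elements. -/
lemma card_bad_le {d : Fin n → ℕ} {L : Matrix (Fin n) (Fin n) ℤ} (hL : IsEncoding d L)
    {a b : Fin n} (hab : L a b = 2) :
    ((pairs L 1).filter (fun w => w.1 ∈ closedNbr L a)).card ≤
      dmax d ^ 2 + 2 * cnt L (-1) a * dmax d + 2 * (labelEdges L (-1)).ncard := by
  rw [card_pairs_filter]
  have ht : 1 ≤ cnt L 2 a := Finset.card_pos.2 ⟨b, by simp [hab]⟩
  have hN : (closedNbr L a).card ≤ dmax d + 2 * cnt L (-1) a := by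
    have h1 := card_closedNbr_le hL a
    have h2 := row_eq hL a
    have h3 := le_dmax d a
    omega
  calc ∑ x ∈ closedNbr L a, cnt L 1 x
      ≤ ∑ x ∈ closedNbr L a, (dmax d + cnt L (-1) x) := by
        refine Finset.sum_le_sum fun x _ => ?_
        have h2 := row_eq hL x
        have h3 := le_dmax d x
        omega
    _ = (closedNbr L a).card * dmax d + ∑ x ∈ closedNbr L a, cnt L (-1) x := by
        rw [Finset.sum_add_distrib, Finset.sum_const, smul_eq_mul]
    _ ≤ (dmax d + 2 * cnt L (-1) a) * dmax d + ∑ x, cnt L (-1) x :=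
        Nat.add_le_add (Nat.mul_le_mul_right _ hN)
          (Finset.sum_le_sum_of_subset (Finset.subset_univ _))
    _ = _ := by
        rw [sum_cnt L hL.1 hL.2.1 (by norm_num)]
        ring

/-! ### The switching -/

/-- The `1`-pairs `(u, v)` available for switching against the `2`-edge `ab`: those for which `u`
is outside the closed neighbourhood of `a`, and `v` outside that of `b`. -/
def avail (L : Matrix (Fin n) (Fin n) ℤ) (w : Fin n × Fin n) : Finset (Fin n × Fin n) :=
  (pairs L 1).filter (fun z => z.1 ∉ closedNbr L w.1 ∧ z.2 ∉ closedNbr L w.2)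

lemma card_avail {d : Fin n → ℕ} {L : Matrix (Fin n) (Fin n) ℤ} (hL : IsEncoding d L)
    {a b : Fin n} (hab : L a b = 2) :
    M d ≤ (avail L (a, b)).card + 4 * (labelEdges L 2).ncard + 2 * dmax d ^ 2 +
      2 * (labelEdges L (-1)).ncard * dmax d + 2 * (labelEdges L (-1)).ncard := by
  have h1 := card_pairs_one hL
  have hA := card_bad_le hL hab
  have hB := card_bad_le hL ((hL.1 b a).trans hab)
  rw [← pairs_swap_filter L hL.1] at hB
  have hne : a ≠ b := by
    rintro rfl
    rw [hL.2.1] at hab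
    norm_num at hab
  have hq := cnt_add_cnt_le L hL.1 hL.2.1 (c := -1) (by norm_num) hne (by rw [hab]; norm_num)
  have hcov : (pairs L 1) ⊆ (avail L (a, b) ∪
      (pairs L 1).filter (fun w => w.1 ∈ closedNbr L a)) ∪
      (pairs L 1).filter (fun w => w.2 ∈ closedNbr L b) := by
    intro z hz
    simp only [avail, Finset.mem_union, Finset.mem_filter, hz, true_and]
    tauto
  have h2 := (Finset.card_le_card hcov).trans ((Finset.card_union_le _ _).trans
    (Nat.add_le_add_right (Finset.card_union_le _ _) _))
  have hm := Nat.mul_le_mul_right (dmax d) hq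
  nlinarith

/-- The symmetric matrix with ones at `(x, y)` and `(y, x)`. -/
def symUnit (x y : Fin n) : Matrix (Fin n) (Fin n) ℤ := fun i j =>
  (if i = x ∧ j = y then 1 else 0) + (if i = y ∧ j = x then 1 else 0)

lemma symUnit_row (x y i : Fin n) :
    ∑ j, symUnit x y i j = (if i = x then 1 else 0) + (if i = y then 1 else 0) := by
  simp only [symUnit, Finset.sum_add_distrib]
  congr 1
  · by_cases h : i = x <;> simp [h]
  · by_cases h : i = y <;> simp [h]

/-- The change of labels effected by the switching that removes one unit from `ab` and from `uv`
and adds one unit to `au` and to `bv`. -/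
def switchMat (w z : Fin n × Fin n) : Matrix (Fin n) (Fin n) ℤ := fun i j =>
  symUnit w.1 z.1 i j + symUnit w.2 z.2 i j - symUnit w.1 w.2 i j - symUnit z.1 z.2 i j

lemma switchMat_row (w z : Fin n × Fin n) (i : Fin n) : ∑ j, switchMat w z i j = 0 := by
  simp only [switchMat, Finset.sum_sub_distrib, Finset.sum_add_distrib, symUnit_row]
  ring

lemma switchMat_symm (w z : Fin n × Fin n) (i j : Fin n) :
    switchMat w z i j = switchMat w z j i := by
  simp only [switchMat, symUnit, and_comm]
  ring

lemma avail_distinct {L : Matrix (Fin n) (Fin n) ℤ} (hs : ∀ i j, L i j = L j i)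
    (hd : ∀ i, L i i = 0) {a b u v : Fin n} (hab : L a b = 2) (hz : (u, v) ∈ avail L (a, b)) :
    L u v = 1 ∧ L a u = 0 ∧ L b v = 0 ∧
      a ≠ b ∧ u ≠ v ∧ u ≠ a ∧ u ≠ b ∧ v ≠ a ∧ v ≠ b := by
  simp only [avail, closedNbr, pairs, Finset.mem_filter, Finset.mem_univ, true_and, not_or,
    not_not] at hz
  obtain ⟨h1, ⟨h2, h3⟩, h4, h5⟩ := hz
  refine ⟨h1, h3, h5, ?_, ?_, h2, ?_, ?_, h4⟩
  · rintro rfl; rw [hd] at hab; norm_num at hab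
  · rintro rfl; rw [hd] at h1; norm_num at h1
  · rintro rfl; rw [hab] at h3; norm_num at h3
  · rintro rfl; rw [hs, hab] at h5; norm_num at h5

/-- Entrywise effect of a switching. -/
lemma switch_entry {L : Matrix (Fin n) (Fin n) ℤ} (hs : ∀ i j, L i j = L j i)
    (hd : ∀ i, L i i = 0) {a b u v : Fin n} (hab : L a b = 2) (hz : (u, v) ∈ avail L (a, b))
    (i j : Fin n) :
    (s(i, j) = s(a, b) ∧ L i j = 2 ∧ switchMat (a, b) (u, v) i j = -1) ∨
    (s(i, j) ≠ s(a, b) ∧ (switchMat (a, b) (u, v) i j = 0 ∨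
      (L i j = 1 ∧ switchMat (a, b) (u, v) i j = -1) ∨
      (L i j = 0 ∧ switchMat (a, b) (u, v) i j = 1))) := by
  obtain ⟨huv, hau, hbv, h1, h2, h3, h4, h5, h6⟩ := avail_distinct hs hd hab hz
  have hba := (hs b a).trans hab
  have hvu := (hs v u).trans huv
  have hua := (hs u a).trans hau
  have hvb := (hs v b).trans hbv
  simp only [switchMat, symUnit, Sym2.eq_iff]
  by_cases ia : i = a <;> by_cases ib : i = b <;> by_cases iu : i = u <;> by_cases iv : i = v <;>
    first
    | (exfalso; grind)
    | (by_cases ja : j = a <;> by_cases jb : j = b <;> by_cases ju : j = u <;> by_cases jv : j = v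
        <;> first
        | (exfalso; grind)
        | grind)

lemma switch_values {L : Matrix (Fin n) (Fin n) ℤ} (hs : ∀ i j, L i j = L j i)
    (hd : ∀ i, L i i = 0) {a b u v : Fin n} (hab : L a b = 2) (hz : (u, v) ∈ avail L (a, b)) :
    (L + switchMat (a, b) (u, v)) a b = 1 ∧ (L + switchMat (a, b) (u, v)) a u = 1 ∧
      (L + switchMat (a, b) (u, v)) b v = 1 := by
  obtain ⟨huv, hau, hbv, h1, h2, h3, h4, h5, h6⟩ := avail_distinct hs hd hab hz
  simp only [Matrix.add_apply, hab, hau, hbv, switchMat, symUnit]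
  refine ⟨?_, ?_, ?_⟩ <;>
    simp [h1, h2, h3, h4, h5, h6, h1.symm, h2.symm, h3.symm, h4.symm, h5.symm, h6.symm]

/-- A switching turns one `2`-edge into a `1`-edge and creates no new defect edge, so validity,
goodness and consistency are inherited. -/
lemma switch_mem {d : Fin n → ℕ} {Z : SimpleGraph (Fin n)} {p q : ℕ}
    {L : Matrix (Fin n) (Fin n) ℤ} (hL : L ∈ Cset d Z p q) {a b u v : Fin n}
    (hab : L a b = 2) (hz : (u, v) ∈ avail L (a, b)) :
    L + switchMat (a, b) (u, v) ∈ Cset d Z (p - 1) q := by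
  obtain ⟨⟨⟨hE, h4, a0, b0, c0, u0, e0, f0, l, hl, hconf⟩, hg1, hg2, hg3⟩, hcons, hp, hq⟩ := hL
  obtain ⟨hs, hd, hent, hrow⟩ := id hE
  set L' := L + switchMat (a, b) (u, v) with hL'
  have hent' : ∀ i j, (s(i, j) = s(a, b) ∧ L i j = 2 ∧ L' i j = 1) ∨
      (s(i, j) ≠ s(a, b) ∧ (L' i j = L i j ∨ (L i j = 1 ∧ L' i j = 0) ∨
        (L i j = 0 ∧ L' i j = 1))) := by
    intro i j
    have h := switch_entry hs hd hab hz i j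
    simp only [hL', Matrix.add_apply]
    rcases h with ⟨e, x, y⟩ | ⟨e, x | ⟨x, y⟩ | ⟨x, y⟩⟩
    · exact Or.inl ⟨e, x, by rw [x, y]; norm_num⟩
    · exact Or.inr ⟨e, Or.inl (by rw [x]; ring)⟩
    · exact Or.inr ⟨e, Or.inr (Or.inl ⟨x, by rw [x, y]; norm_num⟩)⟩
    · exact Or.inr ⟨e, Or.inr (Or.inr ⟨x, by rw [x, y]; norm_num⟩)⟩
  have hne : a ≠ b := (avail_distinct hs hd hab hz).2.2.2.1
  have two : ∀ i j, L' i j = 2 ↔ L i j = 2 ∧ s(i, j) ≠ s(a, b) := by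
    intro i j
    rcases hent' i j with ⟨e, x, y⟩ | ⟨e, x | ⟨x, y⟩ | ⟨x, y⟩⟩
    · simp [e, x, y]
    · simp [e, x]
    · simp [x, y]
    · simp [x, y]
  have neg : ∀ i j, L' i j = -1 ↔ L i j = -1 := by
    intro i j
    rcases hent' i j with ⟨e, x, y⟩ | ⟨e, x | ⟨x, y⟩ | ⟨x, y⟩⟩
    · simp [x, y]
    · simp [x]
    · simp [x, y]
    · simp [x, y]
  have hE2 : labelEdges L' 2 = labelEdges L 2 \ {s(a, b)} := by
    ext e
    simp only [labelEdges, two, Set.mem_sdiff, Set.mem_ofPred_eq, Set.mem_singleton_iff]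
    constructor
    · rintro ⟨x, y, rfl, h1, h2, h3⟩
      exact ⟨⟨x, y, rfl, h1, h2⟩, h3⟩
    · rintro ⟨⟨x, y, rfl, h1, h2⟩, h3⟩
      exact ⟨x, y, rfl, h1, h2, h3⟩
  have hEn : labelEdges L' (-1) = labelEdges L (-1) := by
    ext e
    simp only [labelEdges, neg]
  have hp' : (labelEdges L' 2).ncard = p - 1 := by
    rw [hE2, Set.ncard_sdiff_singleton_of_mem, hp]
    exact ⟨a, b, rfl, hne, hab⟩
  have hq' : (labelEdges L' (-1)).ncard = q := by rw [hEn, hq]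
  have hsub : ∀ D, DefectsWithin L D → DefectsWithin L' D := by
    intro D hD x y hxy h
    have hLL : L' x y = L x y ∧ (L x y = 2 ∨ L x y = -1) := by
      rcases h with h | h
      · have := ((two x y).1 h).1
        exact ⟨h.trans this.symm, Or.inl this⟩
      · have := (neg x y).1 h
        exact ⟨h.trans this.symm, Or.inr this⟩
    rw [hLL.1]
    exact hD x y hxy hLL.2
  refine ⟨⟨⟨⟨?_, ?_, ?_, ?_⟩, ?_, a0, b0, c0, u0, e0, f0, l, hl, ?_⟩, ?_, ?_, ?_⟩, ?_, hp', hq'⟩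
  · intro i j
    simp only [hL', Matrix.add_apply]
    rw [hs i j, switchMat_symm]
  · intro i
    rcases hent' i i with ⟨e, x, y⟩ | ⟨e, x | ⟨x, y⟩ | ⟨x, y⟩⟩
    · rw [hd] at x; norm_num at x
    · rw [x, hd]
    · exact y
    · obtain ⟨-, -, -, h1, h2, h3, h4, h5, h6⟩ := avail_distinct hs hd hab hz
      -- a diagonal entry cannot gain a unit, as `a ≠ u` and `b ≠ v`
      simp only [hL', Matrix.add_apply, hd, switchMat, symUnit] at y ⊢
      grind
  · intro i j
    rcases hent' i j with ⟨e, x, y⟩ | ⟨e, x | ⟨x, y⟩ | ⟨x, y⟩⟩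
    · simp [y]
    · rw [x]; exact hent i j
    · simp [y]
    · simp [y]
  · intro i
    simp only [hL', Matrix.add_apply, Finset.sum_add_distrib, switchMat_row, hrow, add_zero]
  · rw [hp', hq']
    omega
  · rcases hconf with h | h | h | h | h
    · exact Or.inl ⟨h.1, h.2.1, h.2.2.1, h.2.2.2.1, hsub _ h.2.2.2.2⟩
    · exact Or.inr (Or.inl ⟨h.1, hsub _ h.2⟩)
    · exact Or.inr (Or.inr (Or.inl ⟨h.1, hsub _ h.2⟩))
    · exact Or.inr (Or.inr (Or.inr (Or.inl ⟨h.1, hsub _ h.2⟩)))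
    · exact Or.inr (Or.inr (Or.inr (Or.inr ⟨h.1, hsub _ h.2⟩)))
  · exact fun x y h h2 => hg1 x y h ((two x y).1 h2).1
  · exact fun x y z h h' h'' h2 h3 =>
      hg2 x y z h h' h'' ((two x y).1 h2).1 ((two y z).1 h3).1
  · exact fun x y z h h' h'' h2 h3 =>
      hg3 x y z h h' h'' ((two x y).1 h2).1 ((neg y z).1 h3)
  · intro i j
    rcases hent' i j with ⟨e, x, y⟩ | ⟨e, x | ⟨x, y⟩ | ⟨x, y⟩⟩
    · rw [y]; unfold adjMat; split_ifs <;> simp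
    · rw [x]; exact hcons i j
    · rw [y]; unfold adjMat; split_ifs <;> simp
    · rw [y]; unfold adjMat; split_ifs <;> simp

/-! ### Double counting -/

lemma Cset_finite (d : Fin n → ℕ) (Z : SimpleGraph (Fin n)) (p q : ℕ) :
    (Cset d Z p q).Finite := by
  have h : {f : Fin n → Fin n → ℤ | ∀ i, f i ∈ {g : Fin n → ℤ |
      ∀ j, g j ∈ ({-1, 0, 1, 2} : Set ℤ)}}.Finite :=
    Set.Finite.pi' fun _ => Set.Finite.pi' fun _ => Set.toFinite _
  exact h.subset fun L hL i j => hL.1.1.1.2.2.1 i j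

/-- The possible pairs `(u, v)` in a reverse switching along the `1`-pair `(a, b)`. -/
def back (L : Matrix (Fin n) (Fin n) ℤ) (w : Fin n × Fin n) : Finset (Fin n × Fin n) :=
  ((Finset.univ.filter (fun y => L w.1 y = 1)).erase w.2) ×ˢ
    ((Finset.univ.filter (fun y => L w.2 y = 1)).erase w.1)

lemma card_back_le {d : Fin n → ℕ} {L : Matrix (Fin n) (Fin n) ℤ} (hL : IsEncoding d L)
    (hq : (labelEdges L (-1)).ncard ≤ 2) {a b : Fin n} (hab : L a b = 1) :
    (back L (a, b)).card ≤ (dmax d + 1) ^ 2 := by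
  have h : ∀ x, cnt L 1 x - 1 ≤ dmax d + 1 := by
    intro x
    have h1 := row_eq hL x
    have h2 := le_dmax d x
    have h3 := cnt_le L hL.1 hL.2.1 (c := -1) (by norm_num) x
    omega
  rw [back, Finset.card_product, Finset.card_erase_of_mem (by simp [hab]),
    Finset.card_erase_of_mem (by simp [hL.1 b a, hab]), sq]
  exact Nat.mul_le_mul (h a) (h b)

/-- Double count of switchings: `T` bounds from below the switchings at each ordered `2`-pair, and
`K` bounds from above the ordered `1`-pairs along which a switching can be reversed. -/
lemma count_le (d : Fin n → ℕ) (Z : SimpleGraph (Fin n)) {p q T K : ℕ} (hq : q ≤ 2)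
    (hT : ∀ L ∈ Cset d Z p q, ∀ a b, L a b = 2 → T ≤ (avail L (a, b)).card)
    (hK : ∀ L ∈ Cset d Z (p - 1) q, (pairs L 1).card ≤ K) :
    (Cset d Z p q).ncard * (2 * p * T) ≤
      (Cset d Z (p - 1) q).ncard * (K * (dmax d + 1) ^ 2) := by
  set C := (Cset_finite d Z p q).toFinset with hC
  set C' := (Cset_finite d Z (p - 1) q).toFinset with hC'
  have memC : ∀ L, L ∈ C ↔ L ∈ Cset d Z p q := by simp [hC]
  have memC' : ∀ L, L ∈ C' ↔ L ∈ Cset d Z (p - 1) q := by simp [hC']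
  rw [Set.ncard_eq_toFinset_card _ (Cset_finite d Z p q),
    Set.ncard_eq_toFinset_card _ (Cset_finite d Z (p - 1) q), ← hC, ← hC']
  let S := C.sigma fun L => (pairs L 2).sigma fun w => avail L w
  let S' := C'.sigma fun L => (pairs L 1).sigma fun w => back L w
  have hlow : C.card * (2 * p * T) ≤ S.card := by
    simp only [S, Finset.card_sigma]
    rw [← smul_eq_mul]
    refine Finset.card_nsmul_le_sum _ _ _ fun L hL => ?_
    have hL' := (memC L).1 hL
    have hcard : (pairs L 2).card = 2 * p := by
      rw [card_pairs, sum_cnt L hL'.1.1.1.1 hL'.1.1.1.2.1 (by norm_num), hL'.2.2.1]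
    rw [← hcard, ← smul_eq_mul]
    refine Finset.card_nsmul_le_sum _ _ _ fun w hw => ?_
    exact hT L hL' w.1 w.2 (by simpa [pairs] using hw)
  have hup : S'.card ≤ C'.card * (K * (dmax d + 1) ^ 2) := by
    simp only [S', Finset.card_sigma]
    rw [← smul_eq_mul]
    refine Finset.sum_le_card_nsmul _ _ _ fun L hL => ?_
    have hL' := (memC' L).1 hL
    refine le_trans (Finset.sum_le_card_nsmul _ _ ((dmax d + 1) ^ 2) fun w hw => ?_) ?_
    · exact card_back_le hL'.1.1.1 (hL'.2.2.2.trans_le hq) (by simpa [pairs] using hw)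
    · rw [smul_eq_mul]
      exact Nat.mul_le_mul_right _ (hK L hL')
  refine hlow.trans (le_trans ?_ hup)
  refine Finset.card_le_card_of_injOn
    (fun t => ⟨t.1 + switchMat t.2.1 t.2.2, ⟨t.2.1, t.2.2⟩⟩) ?_ ?_
  · rintro ⟨L, ⟨a, b⟩, ⟨u, v⟩⟩ ht
    simp only [S, Finset.coe_sigma, Finset.mem_coe, Set.mem_sigma_iff] at ht
    obtain ⟨hL, hab, hz⟩ := ht
    have hL' := (memC L).1 hL
    have hab' : L a b = 2 := by simpa [pairs] using hab
    have hs := hL'.1.1.1.1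
    have hd := hL'.1.1.1.2.1
    obtain ⟨v1, v2, v3⟩ := switch_values hs hd hab' hz
    obtain ⟨-, -, -, h1, h2, h3, h4, h5, h6⟩ := avail_distinct hs hd hab' hz
    simp only [S', Finset.coe_sigma, Finset.mem_coe, Set.mem_sigma_iff]
    refine ⟨(memC' _).2 (switch_mem hL' hab' hz), ?_, ?_⟩
    · exact Finset.mem_coe.2 (Finset.mem_filter.2 ⟨Finset.mem_univ _, v1⟩)
    · simp only [back, Finset.mem_product, Finset.mem_erase, Finset.mem_filter,
        Finset.mem_univ, true_and]
      exact ⟨⟨h4, v2⟩, h5, v3⟩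
  · rintro ⟨L, w, z⟩ - ⟨L2, w2, z2⟩ - h
    simp only [Sigma.mk.injEq] at h
    obtain ⟨h1, h2⟩ := h
    have h3 := eq_of_heq h2
    simp only [Sigma.mk.injEq] at h3
    obtain ⟨rfl, h4⟩ := h3
    obtain rfl := eq_of_heq h4
    rw [add_right_cancel h1]

/-- Phase 2 bound: for `(p,q) ∈ {(2,1), (2,0), (1,2), (1,1), (1,0)}`,
`|C(p,q)| ≤ 2 d_max² |C(p−1, q)|`. -/
theorem phase2_bound
    (d : Fin n → ℕ) (hgraphical : (Omega d).Nonempty)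
    (hdmin : ∀ v, 1 ≤ d v)
    (hdmax3 : 3 ≤ dmax d)
    (hdmaxM : (dmax d : ℝ) ≤ (1 / 3) * Real.sqrt (M d))
    (Z : SimpleGraph (Fin n)) (hZ : Z ∈ Omega d) :
    ∀ p q : ℕ,
      ((p, q) = (2, 1) ∨ (p, q) = (2, 0) ∨ (p, q) = (1, 2) ∨
        (p, q) = (1, 1) ∨ (p, q) = (1, 0)) →
      (Cset d Z p q).ncard ≤ 2 * dmax d ^ 2 * (Cset d Z (p - 1) q).ncard := by
  intro p q hpq
  have hM : 9 * dmax d ^ 2 ≤ M d := by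
    have h0 : (0 : ℝ) ≤ M d := Nat.cast_nonneg _
    have h1 := Real.sq_sqrt h0
    have h2 := Real.sqrt_nonneg (M d : ℝ)
    have h3 : (0 : ℝ) ≤ dmax d := Nat.cast_nonneg _
    have : (9 * dmax d ^ 2 : ℝ) ≤ M d := by nlinarith
    exact_mod_cast this
  have hp : p = 1 ∨ p = 2 := by
    simp only [Prod.mk.injEq] at hpq
    omega
  have hq : q ≤ 2 := by
    simp only [Prod.mk.injEq] at hpq
    omega
  have hpq' : p = 2 → q ≤ 1 := by
    simp only [Prod.mk.injEq] at hpq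
    omega
  clear hpq hgraphical hdmin hZ hdmaxM
  have hc := count_le d Z (p := p) (q := q)
    (T := M d - (4 * p + 2 * dmax d ^ 2 + 2 * q * dmax d + 2 * q))
    (K := M d + 2 * q - 4 * (p - 1)) hq
    (by
      intro L hL a b hab
      have h := card_avail hL.1.1.1 hab
      rw [hL.2.2.1, hL.2.2.2] at h
      omega)
    (by
      intro L hL
      have h := card_pairs_one hL.1.1.1
      rw [hL.2.2.1, hL.2.2.2] at h
      omega)
  set D := dmax d with hD
  set m := M d with hm
  set X := (Cset d Z p q).ncard
  set Y := (Cset d Z (p - 1) q).ncard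
  set T := m - (4 * p + 2 * D ^ 2 + 2 * q * D + 2 * q) with hTdef
  have hD2 : 3 * D ≤ D ^ 2 := by nlinarith
  have hqD : q * D ≤ 2 * D := Nat.mul_le_mul_right _ hq
  have hTle : m ≤ T + (4 * p + 2 * D ^ 2 + 2 * q * D + 2 * q) := by omega
  have hTpos : 0 < T := by
    have : 2 * q * D ≤ 4 * D := by nlinarith
    rcases hp with rfl | rfl <;> omega
  -- `(D + 1)² ≤ (16/9) D²` because `D ≥ 3`
  have h16 : 9 * (D + 1) ^ 2 ≤ 16 * D ^ 2 := by nlinarith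
  have hK : 4 * (m + 2 * q - 4 * (p - 1)) ≤ 9 * (p * T) := by
    have : 2 * q * D ≤ 4 * D := by nlinarith
    rcases hp with rfl | rfl <;> omega
  have hmain : (m + 2 * q - 4 * (p - 1)) * (D + 1) ^ 2 ≤ 2 * D ^ 2 * (2 * p * T) := by
    have := Nat.mul_le_mul hK h16
    nlinarith
  have hpT : 0 < 2 * p * T := by
    rcases hp with rfl | rfl <;> omega
  refine Nat.le_of_mul_le_mul_right ?_ hpT
  calc X * (2 * p * T) ≤ Y * ((m + 2 * q - 4 * (p - 1)) * (D + 1) ^ 2) := hc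
    _ ≤ Y * (2 * D ^ 2 * (2 * p * T)) := Nat.mul_le_mul_left _ hmain
    _ = 2 * D ^ 2 * Y * (2 * p * T) := by ring

end SwitchChain
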